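/- Let α be a type, let x and y be elements of α, and set A = (x,x) and B = (y,y). Then for every n ≥ 0, the d(n)-th circular shift C_{d(n)}(S_{A,B}(n)) is a palindromic list, where d is Stern's diatomic sequence. -/

import Mathlib

/-- Stern's diatomic sequence. -/
def stern : ℕ → ℕ
  | 0 => 0
  | 1 => 1
  | n + 2 =>
    if (n + 2) % 2 = 0 then stern ((n + 2) / 2)
    else stern ((n + 2) / 2) + stern ((n + 2) / 2 + 1)
decreasing_by all_goals omega

/-- OEIS A003602: a(1)=1, a(2n)=a(n), a(2n+1)=n+1. (a(0)=0 as junk value.) -/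
def aseq : ℕ → ℕ
  | 0 => 0
  | 1 => 1
  | n + 2 =>
    if (n + 2) % 2 = 0 then aseq ((n + 2) / 2)
    else (n + 2) / 2 + 1
decreasing_by all_goals omega

-- the modified sequence `a*`: zero at powers of two.
open Classical in
noncomputable def aStar (j : ℕ) : ℕ :=
  if ∃ k, j = 2 ^ k then 0 else aseq j

theorem aseq_le (n : ℕ) : aseq n ≤ n := by
  induction n using Nat.strong_induction_on with
  | _ n ih =>
    match n with
    | 0 => simp [aseq]
    | 1 => simp [aseq]
    | m + 2 =>
      rw [aseq]
      split
      · exact le_trans (ih ((m + 2) / 2) (by omega)) (by omega)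
      · omega

theorem aStar_le (j : ℕ) : aStar j ≤ j := by
  unfold aStar
  split
  · omega
  · exact aseq_le j

/-- The Markov-type sequence `S_{A,B}(n)`. -/
noncomputable def mseq {α : Type*} (A B : List α) : ℕ → List α
  | 0 => A
  | 1 => B
  | 2 => A ++ B
  | n + 3 =>
    if (n + 3) % 2 = 0 then
      mseq A B ((n + 3) / 2) ++ mseq A B (aseq ((n + 3) / 2))
    else
      mseq A B (aStar ((n + 4) / 2 - 1)) ++ mseq A B ((n + 4) / 2)
decreasing_by
  all_goals first
    | omega
    | exact lt_of_le_of_lt (aseq_le _) (by omega)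
    | exact lt_of_le_of_lt (aStar_le _) (by omega)

/-!
For `n ≥ 1`, the word `S(n+1)` factors as `L ++ R` with `L = S(a*(n))` and `R = S(a(n+1))`, and
these pairs `(L, R)` are the nodes of the binary tree with root `(A, B)` at index `1` in which
node `n` has children `(L, L ++ R)` at index `2n` and `(L ++ R, R)` at index `2n+1`, as in the
tree of Christoffel words. If `A` and `B` are palindromes of the same length `ℓ`, then `L` has
length `ℓ * d(n)`, `R` has length `ℓ * d(n+1)`, and down the tree `L ++ R` stays a product
`u ++ v` of two palindromes with `|u| = |R|`. Rotating `u ++ v` by half of `u` gives a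
palindrome, and for `ℓ = 2` this is the rotation by `d(n+1)`.
-/

theorem stern_two_mul (n : ℕ) : stern (2 * n) = stern n := by
  rcases n with _ | n
  · rfl
  · rw [show 2 * (n + 1) = 2 * n + 2 by ring, stern, if_pos (by lia),
      show (2 * n + 2) / 2 = n + 1 by lia]

theorem stern_two_mul_add_one (n : ℕ) : stern (2 * n + 1) = stern n + stern (n + 1) := by
  rcases n with _ | n
  · simp [stern]
  · rw [show 2 * (n + 1) + 1 = 2 * n + 1 + 2 by ring, stern, if_neg (by lia),
      show (2 * n + 1 + 2) / 2 = n + 1 by lia]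

theorem aseq_two_mul (n : ℕ) : aseq (2 * n) = aseq n := by
  rcases n with _ | n
  · rfl
  · rw [show 2 * (n + 1) = 2 * n + 2 by ring, aseq, if_pos (by lia),
      show (2 * n + 2) / 2 = n + 1 by lia]

theorem aseq_two_mul_add_one (n : ℕ) : aseq (2 * n + 1) = n + 1 := by
  rcases n with _ | n
  · simp [aseq]
  · rw [show 2 * (n + 1) + 1 = 2 * n + 1 + 2 by ring, aseq, if_neg (by lia)]
    lia

theorem aStar_one : aStar 1 = 0 :=
  if_pos ⟨0, rfl⟩

theorem aStar_two_mul (n : ℕ) : aStar (2 * n) = aStar n := by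
  have two_mul_eq_pow_iff : (∃ k, 2 * n = 2 ^ k) ↔ ∃ k, n = 2 ^ k := by
    constructor
    · rintro ⟨_ | k, hk⟩
      · lia
      · exact ⟨k, by lia⟩
    · rintro ⟨k, rfl⟩
      exact ⟨k + 1, by ring⟩
  rw [aStar, aStar, aseq_two_mul]
  classical exact if_congr two_mul_eq_pow_iff rfl rfl

theorem aStar_two_mul_add_one {n : ℕ} (hn : n ≠ 0) : aStar (2 * n + 1) = n + 1 := by
  have not_pow : ¬∃ k, 2 * n + 1 = 2 ^ k := by
    rintro ⟨_ | k, hk⟩ <;> lia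
  rw [aStar, if_neg not_pow, aseq_two_mul_add_one]

section Words

variable {α : Type*}

theorem mseq_two_mul (A B : List α) {n : ℕ} (hn : 2 ≤ n) :
    mseq A B (2 * n) = mseq A B n ++ mseq A B (aseq n) := by
  obtain ⟨k, rfl⟩ := Nat.exists_eq_add_of_le' hn
  rw [show 2 * (k + 2) = 2 * k + 1 + 3 by ring, mseq, if_pos (by lia),
    show (2 * k + 1 + 3) / 2 = k + 2 by lia]

theorem mseq_two_mul_add_one (A B : List α) {n : ℕ} (hn : n ≠ 0) :
    mseq A B (2 * n + 1) = mseq A B (aStar n) ++ mseq A B (n + 1) := by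
  obtain ⟨k, rfl⟩ := Nat.exists_eq_succ_of_ne_zero hn
  rw [show 2 * k.succ + 1 = 2 * k + 3 by lia, mseq, if_neg (by lia),
    show (2 * k + 4) / 2 - 1 = k + 1 by lia, show (2 * k + 4) / 2 = k + 1 + 1 by lia]

theorem mseq_succ (A B : List α) {n : ℕ} (hn : n ≠ 0) :
    mseq A B (n + 1) = mseq A B (aStar n) ++ mseq A B (aseq (n + 1)) := by
  rcases Nat.even_or_odd' n with ⟨j, rfl | rfl⟩
  · rw [mseq_two_mul_add_one A B (by lia), aStar_two_mul, aseq_two_mul_add_one]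
  · obtain rfl | hj := eq_or_ne j 0
    · simp [aStar_one, mseq, aseq]
    · rw [show 2 * j + 1 + 1 = 2 * (j + 1) by ring, mseq_two_mul A B (by lia),
        aStar_two_mul_add_one hj, aseq_two_mul]

/-- `FactorPair A B n L R` says that `(L, R)` is the `n`-th node of the Christoffel-type tree of
pairs of words with root `(A, B)`. Nodes are numbered as in a binary heap, from `1` at the root, so
`L` and `R` are determined by `n` and there is no node `0`. -/
inductive FactorPair (A B : List α) : ℕ → List α → List α → Prop
  | root : FactorPair A B 1 A B
  | left {n : ℕ} {L R : List α} : FactorPair A B n L R → FactorPair A B (2 * n) L (L ++ R)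
  | right {n : ℕ} {L R : List α} : FactorPair A B n L R → FactorPair A B (2 * n + 1) (L ++ R) R

theorem factorPair_mseq (A B : List α) {n : ℕ} (hn : n ≠ 0) :
    FactorPair A B n (mseq A B (aStar n)) (mseq A B (aseq (n + 1))) := by
  induction n using Nat.strong_induction_on with
  | _ n ih =>
    rcases Nat.even_or_odd' n with ⟨j, rfl | rfl⟩
    · have hj : j ≠ 0 := by lia
      rw [aStar_two_mul, aseq_two_mul_add_one, mseq_succ A B hj]
      exact (ih j (by lia) hj).left
    · obtain rfl | hj := eq_or_ne j 0
      · simpa [aStar_one, mseq, aseq] using FactorPair.root (A := A) (B := B)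
      · rw [aStar_two_mul_add_one hj, show 2 * j + 1 + 1 = 2 * (j + 1) by ring, aseq_two_mul,
          mseq_succ A B hj]
        exact (ih j (by lia) hj).right

theorem FactorPair.length_eq {A B L R : List α} {n : ℕ} (h : FactorPair A B n L R)
    (hAB : A.length = B.length) :
    L.length = A.length * stern n ∧ R.length = A.length * stern (n + 1) := by
  induction h with
  | root => simp [stern, hAB]
  | left _ ih =>
    rw [stern_two_mul, stern_two_mul_add_one, List.length_append, ih.1, ih.2, mul_add]
    exact ⟨rfl, rfl⟩
  | @right n _ _ _ ih =>
    rw [stern_two_mul_add_one, show 2 * n + 1 + 1 = 2 * (n + 1) by ring, stern_two_mul,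
      List.length_append, ih.1, ih.2, mul_add]
    exact ⟨rfl, rfl⟩

/-- A second factorization `u ++ v` of `L ++ R`, into palindromes with `|u| = |R|`. That `L ++ u`
and `v ++ R` are palindromes too is what makes such factorizations pass to the pairs
`(L, L ++ R)` and `(L ++ R, R)`. -/
structure PalindromicFactorization (L R u v : List α) : Prop where
  append_eq : L ++ R = u ++ v
  length_eq : u.length = R.length
  reverse_fst : u.reverse = u
  reverse_snd : v.reverse = v
  reverse_left_append : (L ++ u).reverse = L ++ u
  reverse_append_right : (v ++ R).reverse = v ++ R

namespace PalindromicFactorization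

variable {L R u v : List α}

theorem left (h : PalindromicFactorization L R u v) :
    PalindromicFactorization L (L ++ R) (L ++ u) v where
  append_eq := by rw [h.append_eq, List.append_assoc]
  length_eq := by simp [h.length_eq]
  reverse_fst := h.reverse_left_append
  reverse_snd := h.reverse_snd
  reverse_left_append := by
    have u_append_reverse : u ++ L.reverse = L ++ u := by
      simpa [h.reverse_fst] using h.reverse_left_append
    rw [List.reverse_append, h.reverse_left_append, List.append_assoc, u_append_reverse]
  reverse_append_right := by simp [h.append_eq, h.reverse_fst, h.reverse_snd]

theorem right (h : PalindromicFactorization L R u v) :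
    PalindromicFactorization (L ++ R) R u (v ++ R) where
  append_eq := by rw [h.append_eq, List.append_assoc]
  length_eq := h.length_eq
  reverse_fst := h.reverse_fst
  reverse_snd := h.reverse_append_right
  reverse_left_append := by simp [h.append_eq, h.reverse_fst, h.reverse_snd]
  reverse_append_right := by
    have reverse_append_v : R.reverse ++ v = v ++ R := by
      simpa [h.reverse_snd] using h.reverse_append_right
    rw [List.reverse_append, h.reverse_append_right, ← List.append_assoc, reverse_append_v]

end PalindromicFactorization

theorem FactorPair.exists_palindromicFactorization {A B L R : List α} {n : ℕ}
    (h : FactorPair A B n L R) (hA : A.reverse = A) (hB : B.reverse = B)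
    (hAB : A.length = B.length) : ∃ u v, PalindromicFactorization L R u v := by
  induction h with
  | root => exact ⟨A, B, rfl, hAB, hA, hB, by simp [hA], by simp [hB]⟩
  | left _ ih =>
    obtain ⟨u, v, huv⟩ := ih
    exact ⟨_, _, huv.left⟩
  | right _ ih =>
    obtain ⟨u, v, huv⟩ := ih
    exact ⟨_, _, huv.right⟩

theorem exists_eq_append_reverse_of_reverse_eq {u : List α} {m : ℕ} (hu : u.reverse = u)
    (hm : u.length = 2 * m) : ∃ p : List α, p.length = m ∧ u = p ++ p.reverse := by
  have drop_eq : u.drop m = (u.take m).reverse := by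
    rw [List.reverse_take, hu, hm, two_mul, Nat.add_sub_cancel]
  exact ⟨u.take m, by simp [hm, two_mul], by rw [← drop_eq, List.take_append_drop]⟩

theorem reverse_rotate_half_append {u v : List α} {m : ℕ} (hu : u.reverse = u)
    (hv : v.reverse = v) (hm : u.length = 2 * m) :
    ((u ++ v).rotate m).reverse = (u ++ v).rotate m := by
  obtain ⟨p, rfl, rfl⟩ := exists_eq_append_reverse_of_reverse_eq hu hm
  rw [List.append_assoc, List.rotate_append_length_eq]
  simp [hv]

theorem stmt3_general {A B : List α} {k : ℕ} (hA : A.reverse = A) (hB : B.reverse = B)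
    (hA_length : A.length = 2 * k) (hB_length : B.length = 2 * k) (n : ℕ) :
    ((mseq A B n).rotate (k * stern n)).reverse = (mseq A B n).rotate (k * stern n) := by
  have hAB : A.length = B.length := hA_length.trans hB_length.symm
  rcases n with _ | _ | n
  · simpa [mseq, stern] using hA
  · simpa [mseq, stern] using reverse_rotate_half_append hB List.reverse_nil hB_length
  · have pair := factorPair_mseq A B n.succ_ne_zero
    obtain ⟨u, v, huv⟩ := pair.exists_palindromicFactorization hA hB hAB
    have u_length : u.length = 2 * (k * stern (n + 2)) := by
      rw [huv.length_eq, (pair.length_eq hAB).2, hA_length, mul_assoc]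
    rw [mseq_succ A B n.succ_ne_zero, huv.append_eq]
    exact reverse_rotate_half_append huv.reverse_fst huv.reverse_snd u_length

end Words

/-- for `A = (x,x)` and `B = (y,y)`, the `d(n)`-th circular shift of
`S_{A,B}(n)` is palindromic, where `d` is Stern's diatomic sequence. -/
theorem stmt3 {α : Type*} (x y : α) (n : ℕ) :
    ((mseq [x, x] [y, y] n).rotate (stern n)).reverse =
      (mseq [x, x] [y, y] n).rotate (stern n) := by
  simpa only [one_mul] using stmt3_general (k := 1) (A := [x, x]) (B := [y, y]) rfl rfl rfl rfl n
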